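/- Define D : ℕ → ℤ by D(1) = 0 and, for k ≥ 2, D(k) = k·D(k−1) + (k−3)·(k−1) + 2 if k is even and D(k) = k·D(k−1) + (k−1) if k is odd. Then for every n ≥ 1, the sum of the Kendall tau distances between consecutive entries of the list Gen(n) equals D(n). -/

import Mathlib

/-- `cyc i j` is the permutation of positions with `i ↦ j`, `p ↦ p - 1` for `i < p ≤ j`,
and every other position fixed (the cycle `(j, j-1, …, i)`); it describes extracting
the entry at position `j` and inserting it at position `i`. -/
def cyc {n : ℕ} (i j : Fin n) : Equiv.Perm (Fin n) :=
  (((List.finRange n).filter (fun p => decide (i ≤ p ∧ p ≤ j))).reverse).formPerm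

/-- `left_i`: exchange the entries at positions `i` and `i+1`. -/
def leftMove (n i : ℕ) (a : Equiv.Perm (Fin n)) : Equiv.Perm (Fin n) :=
  if h : i + 1 < n then (Equiv.swap ⟨i, by omega⟩ ⟨i + 1, h⟩).trans a else a

/-- `right_i`: move the entry at position `n-1` to position `i`, shifting the entries
at positions `i, …, n-2` one position to the right. -/
def rightMove (n i : ℕ) (a : Equiv.Perm (Fin n)) : Equiv.Perm (Fin n) :=
  if h : i + 1 < n then (cyc (⟨i, by omega⟩ : Fin n) ⟨n - 1, by omega⟩).trans a else a

/-- The pattern of moves performed between the recursive calls on a sublist of `m = n - i`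
elements: one `left`, then `m - 3` times `right` (if `m` is even) or `left` (if `m` is odd),
and finally (when `m > 2`) one more `left`.  `true` codes `left`, `false` codes `right`. -/
def movesList (m : ℕ) : List Bool :=
  true :: (List.replicate (m - 3) (if Even m then false else true) ++
    if 2 < m then [true] else [])

/-- The recursive generation procedure `gen(a, i)` (with an extra fuel argument making the
recursion structural; `fuel = n - i` always suffices, and `Gen` below uses fuel `n`).
If `i ≥ n - 1` it emits `[a]`; otherwise it first emits `gen(a, i+1)` (the "no-op" call)
and then, for each move prescribed by `movesList (n - i)`, applies that move at position `i`
to the last arrangement emitted so far and emits the generated list of the result. -/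
def gen (n : ℕ) : ℕ → Equiv.Perm (Fin n) → ℕ → List (Equiv.Perm (Fin n))
  | 0, a, _ => [a]
  | fuel + 1, a, i =>
      if i + 1 < n then
        (movesList (n - i)).foldl
          (fun acc b =>
            acc ++ gen n fuel
              ((if b then leftMove n i else rightMove n i) (acc.getLastD 1)) (i + 1))
          (gen n fuel a (i + 1))
      else [a]

/-- `Gen n = gen(id, 0)`: the full list of arrangements produced by the algorithm. -/
def Gen (n : ℕ) : List (Equiv.Perm (Fin n)) := gen n n 1 0


/-- The Kendall tau distance between two arrangements `σ τ : Fin n ≃ Fin n`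
(where `σ j` is the entry at position `j`): the number of pairs of positions `p < q`
whose entries occur in the opposite relative order in the two arrangements, i.e. the
number of inversions of `σ⁻¹ ∘ τ`. -/
def kendall {n : ℕ} (σ τ : Equiv.Perm (Fin n)) : ℕ :=
  ((Finset.univ : Finset (Fin n × Fin n)).filter
    (fun pq => pq.1 < pq.2 ∧ σ.symm (τ pq.2) < σ.symm (τ pq.1))).card

/-- `D 1 = 0` and, for `k ≥ 2`, `D k = k·D (k-1) + (k-3)·(k-1) + 2` if `k` is even and
`D k = k·D (k-1) + (k-1)` if `k` is odd (the value `D 0 = 0` is irrelevant junk). -/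
def D : ℕ → ℤ
  | 0 => 0
  | 1 => 0
  | k + 2 =>
      if Even (k + 2) then
        ((k : ℤ) + 2) * D (k + 1) + (((k : ℤ) + 2) - 3) * (((k : ℤ) + 2) - 1) + 2
      else
        ((k : ℤ) + 2) * D (k + 1) + (((k : ℤ) + 2) - 1)


lemma cyc_list {n : ℕ} (i : ℕ) (h : i + 1 < n) :
    (List.finRange n).filter (fun p => decide ((⟨i, by omega⟩ : Fin n) ≤ p ∧ p ≤ (⟨n - 1, by omega⟩ : Fin n)))
      = (List.finRange n).drop i := by
  conv_lhs => rw [← List.take_append_drop i (List.finRange n)]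
  rw [List.filter_append]
  have h1 : ((List.finRange n).take i).filter (fun p => decide ((⟨i, by omega⟩ : Fin n) ≤ p ∧ p ≤ (⟨n - 1, by omega⟩ : Fin n))) = [] := by
    rw [List.filter_eq_nil_iff]
    intro a ha
    obtain ⟨k, hk, rfl⟩ := List.mem_iff_getElem.1 ha
    simp at hk
    simp [Fin.le_def]
    omega
  have h2 : ((List.finRange n).drop i).filter (fun p => decide ((⟨i, by omega⟩ : Fin n) ≤ p ∧ p ≤ (⟨n - 1, by omega⟩ : Fin n))) = (List.finRange n).drop i := by
    rw [List.filter_eq_self]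
    intro a ha
    obtain ⟨k, hk, rfl⟩ := List.mem_iff_getElem.1 ha
    simp at hk
    simp [Fin.le_def]
    omega
  rw [h1, h2, List.nil_append]

lemma cyc_val {n : ℕ} (i : ℕ) (h : i + 1 < n) (p : Fin n) :
    ((cyc (⟨i, by omega⟩ : Fin n) ⟨n - 1, by omega⟩ p : Fin n) : ℕ) =
      if (p : ℕ) < i then (p : ℕ) else if (p : ℕ) = i then n - 1 else p - 1 := by
  have hnd : ((List.finRange n).drop i).Nodup := (List.nodup_finRange n).sublist (List.drop_sublist _ _)
  unfold cyc
  rw [cyc_list i h, List.formPerm_reverse]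
  have key : ∀ k (hk : k < n - i),
      ((List.finRange n).drop i).formPerm⁻¹ (⟨i + (k + 1) % (n - i), by
        have := Nat.mod_lt (k+1) (show n - i > 0 by omega)
        omega⟩) = ⟨i + k, by omega⟩ := by
    intro k hk
    rw [Equiv.Perm.inv_eq_iff_eq]
    have := List.formPerm_apply_getElem _ hnd k (by simp; omega)
    simp at this
    rw [this]
  split_ifs with h1 h2
  · have : ((List.finRange n).drop i).formPerm⁻¹ p = p := by
      rw [Equiv.Perm.inv_eq_iff_eq]
      symm
      apply List.formPerm_apply_of_notMem
      intro ha
      obtain ⟨k, hk, rfl⟩ := List.mem_iff_getElem.1 ha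
      simp at h1
    rw [this]
  · have := key (n - i - 1) (by omega)
    have e : n - i - 1 + 1 = n - i := by omega
    simp only [e, Nat.mod_self] at this
    have hp : p = ⟨i + 0, by omega⟩ := Fin.ext (by simp [h2])
    rw [hp, this]
    simp; omega
  · have hp2 := p.2
    have := key (p - i - 1) (by omega)
    have e : ((p:ℕ) - i - 1 + 1) % (n - i) = p - i := by
      rw [Nat.mod_eq_of_lt] <;> omega
    simp only [e] at this
    have hp : p = ⟨i + (p - i), by omega⟩ := Fin.ext (by simp; omega)
    rw [← hp] at this
    rw [this]
    simp; omega

lemma kendall_right {n : ℕ} (i : ℕ) (h : i + 1 < n) (a : Equiv.Perm (Fin n)) :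
    kendall a (rightMove n i a) = n - 1 - i := by
  unfold kendall rightMove
  rw [dif_pos h]
  have : (Finset.univ : Finset (Fin n × Fin n)).filter (fun pq => pq.1 < pq.2 ∧
      a.symm (((cyc (⟨i, by omega⟩ : Fin n) ⟨n - 1, by omega⟩).trans a) pq.2) <
      a.symm (((cyc (⟨i, by omega⟩ : Fin n) ⟨n - 1, by omega⟩).trans a) pq.1))
      = ({(⟨i, by omega⟩ : Fin n)} : Finset (Fin n)) ×ˢ Finset.Ioi (⟨i, by omega⟩ : Fin n) := by
    ext ⟨p, q⟩
    have hp := p.2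
    have hq := q.2
    simp only [Finset.mem_filter, Finset.mem_univ, true_and, Equiv.trans_apply,
      Equiv.symm_apply_apply, Fin.lt_def, cyc_val i h, Finset.mem_product, Finset.mem_singleton,
      Finset.mem_Ioi, Fin.ext_iff]
    split_ifs <;> omega
  rw [this, Finset.card_product]
  simp

lemma kendall_left {n : ℕ} (i : ℕ) (h : i + 1 < n) (a : Equiv.Perm (Fin n)) :
    kendall a (leftMove n i a) = 1 := by
  unfold kendall leftMove
  rw [dif_pos h, Finset.card_eq_one]
  refine ⟨(⟨i, by omega⟩, ⟨i + 1, h⟩), ?_⟩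
  ext ⟨p, q⟩
  simp only [Finset.mem_filter, Finset.mem_univ, true_and, Equiv.trans_apply,
      Equiv.symm_apply_apply, Finset.mem_singleton, Prod.mk.injEq, Equiv.swap_apply_def]
  split_ifs <;> simp only [Fin.lt_def, Fin.ext_iff] at * <;> omega

def KS {n : ℕ} (l : List (Equiv.Perm (Fin n))) : ℤ :=
  (l.zipWith (fun σ τ => (kendall σ τ : ℤ)) l.tail).sum

lemma KS_append {n : ℕ} (l : List (Equiv.Perm (Fin n))) (b : Equiv.Perm (Fin n)) (t : List (Equiv.Perm (Fin n)))
    (hl : l ≠ []) : KS (l ++ b :: t) = KS l + kendall (l.getLastD 1) b + KS (b :: t) := by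
  induction l with
  | nil => exact absurd rfl hl
  | cons x l ih =>
    cases l with
    | nil => simp [KS]
    | cons y l =>
      have := ih (by simp)
      simp [KS] at this ⊢
      rw [this]; ring

lemma fold_aux {n : ℕ} (i : ℕ) (h : i + 1 < n) (g : Equiv.Perm (Fin n) → List (Equiv.Perm (Fin n)))
    (d : ℤ) (hg : ∀ a, (∃ t, g a = a :: t) ∧ KS (g a) = d) (L : List Bool) :
    ∀ a t, (∃ t', L.foldl (fun acc b =>
            acc ++ g ((if b then leftMove n i else rightMove n i) (acc.getLastD 1))) (a :: t) = a :: t') ∧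
      KS (L.foldl (fun acc b =>
            acc ++ g ((if b then leftMove n i else rightMove n i) (acc.getLastD 1))) (a :: t))
       = KS (a :: t) + (L.map (fun b => (if b then 1 else ((n:ℤ) - 1 - i)) + d)).sum := by
  induction L with
  | nil => intro a t; simp
  | cons b L ih =>
    intro a t
    obtain ⟨⟨u, hu⟩, hd⟩ := hg ((if b then leftMove n i else rightMove n i) ((a :: t).getLastD 1))
    have hK := KS_append (a :: t) ((if b then leftMove n i else rightMove n i) ((a :: t).getLastD 1)) u (by simp)
    rw [← hu, hd] at hK
    rw [List.foldl_cons]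
    rw [List.cons_append] at hK ⊢
    refine ⟨(ih _ _).1, ?_⟩
    rw [(ih _ _).2, hK]
    cases b
    · simp only [Bool.false_eq_true, if_false, kendall_right i h, List.map_cons, List.sum_cons]
      have : ((n - 1 - i : ℕ) : ℤ) = n - 1 - i := by omega
      rw [this]; ring
    · simp only [if_true, kendall_left i h, List.map_cons, List.sum_cons]
      push_cast; ring

lemma gen_aux (n fuel : ℕ) : ∀ (a : Equiv.Perm (Fin n)) (i : ℕ), n - i ≤ fuel →
    (∃ t, gen n fuel a i = a :: t) ∧ KS (gen n fuel a i) = D (n - i) := by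
  induction fuel with
  | zero =>
    intro a i hf
    have : n - i = 0 := by omega
    simp [gen, this, KS, D]
  | succ fuel ih =>
    intro a i hf
    by_cases h : i + 1 < n
    · have hg : ∀ a, (∃ t, gen n fuel a (i+1) = a :: t) ∧ KS (gen n fuel a (i+1)) = D (n - (i+1)) :=
        fun a => ih a (i+1) (by omega)
      obtain ⟨⟨t, ht⟩, hd⟩ := hg a
      have := fold_aux i h (fun a => gen n fuel a (i+1)) _ hg (movesList (n - i)) a t
      rw [gen, if_pos h, ht]
      refine ⟨this.1, ?_⟩
      rw [this.2, ← ht, hd]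
      obtain ⟨k, hk⟩ : ∃ k, n = i + k + 2 := ⟨n - i - 2, by omega⟩
      subst hk
      have e1 : i + k + 2 - i = k + 2 := by omega
      have e2 : i + k + 2 - (i + 1) = k + 1 := by omega
      rw [e1, e2, D, movesList]
      rcases k with _ | k
      · simp [D]
      · have e3 : k + 1 + 2 - 3 = k := by omega
        rw [e3, if_pos (show 2 < k + 1 + 2 by omega)]
        by_cases he : Even (k + 1 + 2)
        · simp [he]; ring
        · simp [he]; ring
    · have : n - i = 0 ∨ n - i = 1 := by omega
      rw [gen, if_neg h]
      rcases this with h | h <;> simp [h, KS, D]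

theorem sum_kendall_gen (n : ℕ) (hn : 1 ≤ n) :
    ((Gen n).zipWith (fun σ τ => (kendall σ τ : ℤ)) (Gen n).tail).sum = D n := by
  exact (gen_aux n n 1 0 (by omega)).2
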